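/- Let k ≥ 1, m ≥ 2, let q : ℝ^{k+1}_+ → ℝ and φ : ℝ^m_+ → ℝ both satisfy the cost-function conditions, and define q̃(x,y) = q(x, φ(y)) for x ∈ ℝ^k_+, y ∈ ℝ^m_+. Then for all z ∈ ℂ^k and w = (w_1,…,w_m) ∈ ℂ^m with Re z ∈ ℝ^k_+ and Re w ∈ ℝ^m_+, writing s = w_1 + ⋯ + w_m, one has (M e^{−q̃})(z,w) = (M e^{−φ})(w) · (M e^{−q})(z,s) / Γ(s), where Γ is the Gamma function. -/

import Mathlib

open MeasureTheory Complex Set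

noncomputable section

/-- The positive orthant `ℝ^n_+`. -/
def posOrth (n : ℕ) : Set (Fin n → ℝ) := {x | ∀ i, 0 < x i}

/-- `q` satisfies the cost-function conditions: `C¹` on `ℝ^n_+`, positive,
positively homogeneous of degree one, with bounded level sets. -/
def IsCostFun (n : ℕ) (q : (Fin n → ℝ) → ℝ) : Prop :=
  ContDiffOn ℝ 1 q (posOrth n) ∧
  (∀ x ∈ posOrth n, 0 < q x) ∧
  (∀ lam : ℝ, 0 < lam → ∀ x ∈ posOrth n, q (fun i => lam * x i) = lam * q x) ∧
  (∀ t : ℝ, Bornology.IsBounded {x | x ∈ posOrth n ∧ q x = t})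

/-- The `n`-dimensional Mellin transform `(Mg)(z) = ∫_{ℝ^n_+} x^{z-I} g(x) dx`. -/
def mellinT (n : ℕ) (g : (Fin n → ℝ) → ℝ) (z : Fin n → ℂ) : ℂ :=
  ∫ x in posOrth n, (∏ i, (x i : ℂ) ^ (z i - 1)) * g x

/-- The composed cost function `q̃(x,y) = q(x, φ(y))` on `ℝ^{k+m}_+`. -/
def nestedCost (k m : ℕ) (q : (Fin (k + 1) → ℝ) → ℝ) (φ : (Fin m → ℝ) → ℝ)
    (v : Fin (k + m) → ℝ) : ℝ :=
  q (Fin.snoc (fun i => v (Fin.castAdd m i)) (φ (fun j => v (Fin.natAdd k j))))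

/-!
Let `φ` be positive and homogeneous of degree one on a cone of dimension `d`, and let `A` be a
weight homogeneous of degree `s - d`. Then the ratio of `∫ A · (F ∘ φ)` to the one-variable Mellin
transform `(MF)(s)` does not depend on `F`. Indeed, by Fubini, `(∫ A · (F ∘ φ)) (MG)(s)` is the
Mellin transform at `s` of the correlation
`P_{F,G}(r) = ∫ A(x) F(φ(x)) φ(x)^s G(r φ(x)) dx`, and rescaling `x` by `r` gives
`P_{G,F}(1/r) = r^{2s} P_{F,G}(r)`, so that `P_{F,G}` and `P_{G,F}` have the same Mellin transform
at `s`. Taking `A(y) = y^{w-I}`, `G(t) = e^{-t}` and `F = e^{-q(x,·)}`, then integrating over `x`,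
yields the theorem. All integrals converge absolutely because `q̃` is again a cost function, and
homogeneity and bounded level sets force a cost function to dominate a multiple of `∑ x_i`.
-/

section Fubini

variable {α : Type*} [MeasurableSpace α] {μ : Measure α}

lemma quasiMeasurePreserving_const_mul_Ioi {c : ℝ} (hc : 0 < c) :
    Measure.QuasiMeasurePreserving (c * ·)
      (volume.restrict (Ioi 0)) (volume.restrict (Ioi 0)) := by
  have hvol : Measure.QuasiMeasurePreserving (c * ·) (volume : Measure ℝ) volume :=
    ⟨measurable_const_mul c, by
      rw [Real.map_volume_mul_left hc.ne']
      exact Measure.smul_absolutelyContinuous⟩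
  exact hvol.restrict fun t ht => mul_pos hc ht

lemma aestronglyMeasurable_comp_mul_Ioi {β : Type*} [TopologicalSpace β]
    {b : α → ℝ} (hb : AEMeasurable b μ) (hb_pos : ∀ᵐ x ∂μ, 0 < b x)
    {f : ℝ → β} (hf : AEStronglyMeasurable f (volume.restrict (Ioi 0))) :
    AEStronglyMeasurable (fun p : α × ℝ => f (b p.1 * p.2))
      (μ.prod (volume.restrict (Ioi 0))) := by
  have hmk : Measure.QuasiMeasurePreserving (fun p : α × ℝ => hb.mk b p.1 * p.2)
      (μ.prod (volume.restrict (Ioi 0))) (volume.restrict (Ioi 0)) := by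
    refine QuasiMeasurePreserving.prod_of_right
      ((hb.measurable_mk.comp measurable_fst).mul measurable_snd) ?_
    filter_upwards [hb_pos, hb.ae_eq_mk] with x hx hmk_x
    exact quasiMeasurePreserving_const_mul_Ioi (hmk_x ▸ hx)
  refine (hf.comp_quasiMeasurePreserving hmk).congr ?_
  filter_upwards [Measure.quasiMeasurePreserving_fst.ae_eq_comp hb.ae_eq_mk] with p hp
  simp only [Function.comp_apply] at hp ⊢
  rw [hp]

lemma integrable_mul_comp_mul_Ioi [SFinite μ] {b : α → ℝ} (hb : AEMeasurable b μ)
    (hb_pos : ∀ᵐ x ∂μ, 0 < b x) {h : α → ℂ} (hh : Integrable h μ)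
    {f : ℝ → ℂ} (hf : IntegrableOn f (Ioi 0)) :
    Integrable (fun p : α × ℝ => h p.1 * (b p.1 • f (b p.1 * p.2)))
      (μ.prod (volume.restrict (Ioi 0))) := by
  have hmeas : AEStronglyMeasurable (fun p : α × ℝ => h p.1 * (b p.1 • f (b p.1 * p.2)))
      (μ.prod (volume.restrict (Ioi 0))) :=
    hh.1.comp_fst.mul (hb.aestronglyMeasurable.comp_fst.smul
      (aestronglyMeasurable_comp_mul_Ioi hb hb_pos hf.1))
  refine (integrable_prod_iff hmeas).2 ⟨?_, ?_⟩
  · filter_upwards [hb_pos] with x hx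
    have hscaled : IntegrableOn (fun t => f (b x * t)) (Ioi 0) := by
      rwa [integrableOn_Ioi_comp_mul_left_iff f 0 hx, mul_zero]
    exact (hscaled.smul (b x)).const_mul (h x)
  · refine (hh.norm.mul_const (∫ t in Ioi 0, ‖f t‖)).congr ?_
    filter_upwards [hb_pos] with x hx
    have hscale := integral_comp_mul_left_Ioi' (fun t => ‖f t‖) 0 hx
    rw [mul_zero, smul_eq_mul] at hscale
    simp only [norm_mul, norm_smul, Real.norm_of_nonneg hx.le, integral_const_mul, hscale]

lemma integral_Ioi_integral_mul_comp_mul [SFinite μ] {b : α → ℝ} (hb : AEMeasurable b μ)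
    (hb_pos : ∀ᵐ x ∂μ, 0 < b x) {h : α → ℂ} (hh : Integrable h μ)
    {f : ℝ → ℂ} (hf : IntegrableOn f (Ioi 0)) :
    ∫ t in Ioi 0, ∫ x, h x * (b x • f (b x * t)) ∂μ = (∫ x, h x ∂μ) * ∫ t in Ioi 0, f t := by
  rw [← integral_integral_swap (integrable_mul_comp_mul_Ioi hb hb_pos hh hf),
    ← integral_mul_const]
  refine integral_congr_ae ?_
  filter_upwards [hb_pos] with x hx
  have hscale := integral_comp_mul_left_Ioi' f 0 hx
  rw [mul_zero] at hscale
  rw [integral_const_mul, integral_smul, hscale]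

/-- The weighted multiplicative correlation
`r ↦ ∫_C A(x) F(φ(x)) φ(x)^s G(r φ(x)) dμ(x)` of `F` and `G` along `φ`. -/
def radialCorrelation (μ : Measure α) (C : Set α) (A : α → ℂ) (φ : α → ℝ) (s : ℂ)
    (F G : ℝ → ℂ) (r : ℝ) : ℂ :=
  ∫ x in C, A x * F (φ x) * ((φ x : ℂ) ^ s * G (r * φ x)) ∂μ

lemma mellin_radialCorrelation [SFinite μ] {C : Set α} {A : α → ℂ} {φ : α → ℝ} {s : ℂ}
    {F G : ℝ → ℂ} (hC : MeasurableSet C)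
    (hφ : AEMeasurable φ (μ.restrict C)) (hφ_pos : ∀ x ∈ C, 0 < φ x)
    (hF : IntegrableOn (fun x => A x * F (φ x)) C μ) (hG : MellinConvergent G s) :
    mellin (radialCorrelation μ C A φ s F G) s =
      (∫ x in C, A x * F (φ x) ∂μ) * mellin G s := by
  rw [mellin, mellin,
    ← integral_Ioi_integral_mul_comp_mul hφ (ae_restrict_of_forall_mem hC hφ_pos) hF hG]
  refine setIntegral_congr_fun measurableSet_Ioi fun r (hr : 0 < r) => ?_
  rw [radialCorrelation, smul_eq_mul, ← integral_const_mul]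
  refine setIntegral_congr_fun hC fun x hx => ?_
  have hφx : (φ x : ℂ) ≠ 0 := ofReal_ne_zero.2 (hφ_pos x hx).ne'
  have hsplit : (φ x : ℂ) ^ s = φ x * (φ x : ℂ) ^ (s - 1) := by
    rw [cpow_sub _ _ hφx, cpow_one, mul_div_cancel₀ _ hφx]
  simp only [real_smul, smul_eq_mul, ofReal_mul, mul_cpow_ofReal_nonneg (hφ_pos x hx).le hr.le,
    hsplit, mul_comm r]
  ring

end Fubini

section Cone

variable {E : Type*} [NormedAddCommGroup E] [NormedSpace ℝ E] [FiniteDimensional ℝ E]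
  [MeasurableSpace E] [BorelSpace E] {μ : Measure E} [μ.IsAddHaarMeasure]
  {C : Set E} {A : E → ℂ} {φ : E → ℝ} {s : ℂ} {F G : ℝ → ℂ}

open scoped Pointwise in
lemma pow_finrank_smul_setIntegral_comp_smul {V : Type*} [NormedAddCommGroup V] [NormedSpace ℝ V]
    (hC_smul : ∀ r : ℝ, 0 < r → ∀ x ∈ C, r • x ∈ C) (f : E → V) {r : ℝ} (hr : 0 < r) :
    r ^ Module.finrank ℝ E • ∫ x in C, f (r • x) ∂μ = ∫ x in C, f x ∂μ := by
  have hrC : r • C = C := by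
    refine (smul_set_subset_iff.2 fun x hx => hC_smul r hr x hx).antisymm fun x hx => ?_
    exact (mem_smul_set_iff_inv_smul_mem₀ hr.ne' C x).2 (hC_smul _ (inv_pos.2 hr) x hx)
  rw [Measure.setIntegral_comp_smul_of_pos μ f C hr, hrC, smul_inv_smul₀ (pow_pos hr _).ne']

lemma radialCorrelation_inv (hC : MeasurableSet C)
    (hC_smul : ∀ r : ℝ, 0 < r → ∀ x ∈ C, r • x ∈ C) (hφ_pos : ∀ x ∈ C, 0 < φ x)
    (hφ_smul : ∀ r : ℝ, 0 < r → ∀ x ∈ C, φ (r • x) = r * φ x)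
    (hA_smul : ∀ r : ℝ, 0 < r → ∀ x ∈ C,
      A (r • x) = (r : ℂ) ^ (s - Module.finrank ℝ E) * A x)
    {r : ℝ} (hr : 0 < r) :
    radialCorrelation μ C A φ s G F r⁻¹ =
      (r : ℂ) ^ (2 * s) * radialCorrelation μ C A φ s F G r := by
  have hr0 : (r : ℂ) ≠ 0 := ofReal_ne_zero.2 hr.ne'
  have hpow : (r : ℂ) ^ (2 * s) =
      (r : ℂ) ^ Module.finrank ℝ E * ((r : ℂ) ^ (s - Module.finrank ℝ E) * (r : ℂ) ^ s) := by
    rw [← cpow_natCast, ← cpow_add _ _ hr0, ← cpow_add _ _ hr0]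
    ring_nf
  rw [radialCorrelation, radialCorrelation,
    ← pow_finrank_smul_setIntegral_comp_smul hC_smul _ hr, real_smul, ofReal_pow, hpow, mul_assoc]
  congr 1
  rw [← integral_const_mul]
  refine setIntegral_congr_fun hC fun x hx => ?_
  simp only [hA_smul r hr x hx, hφ_smul r hr x hx, inv_mul_cancel_left₀ hr.ne', ofReal_mul,
    mul_cpow_ofReal_nonneg hr.le (hφ_pos x hx).le]
  ring

theorem integral_comp_mul_mellin_comm (hC : MeasurableSet C)
    (hC_smul : ∀ r : ℝ, 0 < r → ∀ x ∈ C, r • x ∈ C)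
    (hφ : AEMeasurable φ (μ.restrict C)) (hφ_pos : ∀ x ∈ C, 0 < φ x)
    (hφ_smul : ∀ r : ℝ, 0 < r → ∀ x ∈ C, φ (r • x) = r * φ x)
    (hA_smul : ∀ r : ℝ, 0 < r → ∀ x ∈ C,
      A (r • x) = (r : ℂ) ^ (s - Module.finrank ℝ E) * A x)
    (hF : MellinConvergent F s) (hG : MellinConvergent G s)
    (hAF : IntegrableOn (fun x => A x * F (φ x)) C μ)
    (hAG : IntegrableOn (fun x => A x * G (φ x)) C μ) :
    (∫ x in C, A x * F (φ x) ∂μ) * mellin G s = (∫ x in C, A x * G (φ x) ∂μ) * mellin F s := by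
  rw [← mellin_radialCorrelation hC hφ hφ_pos hAF hG,
    ← mellin_radialCorrelation hC hφ hφ_pos hAG hF]
  calc mellin (radialCorrelation μ C A φ s F G) s
      = mellin (fun r => (r : ℂ) ^ (2 * s) • radialCorrelation μ C A φ s F G r) (-s) := by
        rw [mellin_cpow_smul, two_mul, neg_add_cancel_left]
    _ = mellin (fun r => radialCorrelation μ C A φ s G F r⁻¹) (-s) :=
        setIntegral_congr_fun measurableSet_Ioi fun r hr => by
          simp only [radialCorrelation_inv hC hC_smul hφ_pos hφ_smul hA_smul hr, smul_eq_mul]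
    _ = mellin (radialCorrelation μ C A φ s G F) s := by
        rw [mellin_comp_inv, neg_neg]

end Cone

section Kernel

variable {ι : Type*} [Fintype ι]

/-- The kernel `x^{z-I}` of the multivariate Mellin transform. -/
def mellinKernel (z : ι → ℂ) (x : ι → ℝ) : ℂ :=
  ∏ i, (x i : ℂ) ^ (z i - 1)

lemma mellinKernel_ne_zero (z : ι → ℂ) {x : ι → ℝ} (hx : ∀ i, 0 < x i) : mellinKernel z x ≠ 0 :=
  Finset.prod_ne_zero_iff.2 fun i _ => by simp [cpow_eq_zero_iff, (hx i).ne']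

lemma norm_mellinKernel (z : ι → ℂ) {x : ι → ℝ} (hx : ∀ i, 0 < x i) :
    ‖mellinKernel z x‖ = ∏ i, x i ^ ((z i).re - 1) := by
  simp only [mellinKernel, norm_prod, norm_cpow_eq_rpow_re_of_pos (hx _), sub_re, one_re]

lemma continuousOn_mellinKernel (z : ι → ℂ) : ContinuousOn (mellinKernel z) {x | ∀ i, 0 < x i} :=
  continuousOn_finsetProd _ fun i _ =>
    (continuous_ofReal.comp (continuous_apply i)).continuousOn.cpow_const
      fun _ hx => ofReal_mem_slitPlane.2 (hx i)

lemma mellinKernel_smul (z : ι → ℂ) {r : ℝ} (hr : 0 < r) {x : ι → ℝ} (hx : ∀ i, 0 < x i) :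
    mellinKernel z (r • x) = (r : ℂ) ^ (∑ i, z i - Fintype.card ι) * mellinKernel z x := by
  have hr0 : (r : ℂ) ≠ 0 := ofReal_ne_zero.2 hr.ne'
  have hexp : ∑ i, z i - Fintype.card ι = ∑ i, (z i - 1) := by simp
  simp only [mellinKernel, Pi.smul_apply, smul_eq_mul, ofReal_mul,
    mul_cpow_ofReal_nonneg hr.le (hx _).le, Finset.prod_mul_distrib, hexp, cpow_def_of_ne_zero hr0,
    Finset.mul_sum, exp_sum]

lemma mellinKernel_append {k m : ℕ} (z : Fin k → ℂ) (w : Fin m → ℂ) (x : Fin k → ℝ)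
    (y : Fin m → ℝ) :
    mellinKernel (Fin.append z w) (Fin.append x y) = mellinKernel z x * mellinKernel w y := by
  simp only [mellinKernel, Fin.prod_univ_add, Fin.append_left, Fin.append_right]

lemma mellinKernel_snoc {k : ℕ} (z : Fin k → ℂ) (s : ℂ) (x : Fin k → ℝ) (t : ℝ) :
    mellinKernel (Fin.snoc z s : Fin (k + 1) → ℂ) (Fin.snoc x t : Fin (k + 1) → ℝ) =
      mellinKernel z x * (t : ℂ) ^ (s - 1) := by
  simp only [mellinKernel, Fin.prod_univ_castSucc, Fin.snoc_castSucc, Fin.snoc_last]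

lemma re_sum_pos [Nonempty ι] {w : ι → ℂ} (hw : ∀ i, 0 < (w i).re) : 0 < (∑ i, w i).re :=
  re_sum Finset.univ w ▸ Finset.sum_pos (fun i _ => hw i) Finset.univ_nonempty

lemma re_append_pos {k m : ℕ} {z : Fin k → ℂ} {w : Fin m → ℂ} (hz : ∀ i, 0 < (z i).re)
    (hw : ∀ j, 0 < (w j).re) (i : Fin (k + m)) : 0 < (Fin.append z w i).re :=
  Fin.addCases (fun i => by simpa using hz i) (fun j => by simpa using hw j) i

lemma re_snoc_pos {k : ℕ} {z : Fin k → ℂ} {s : ℂ} (hz : ∀ i, 0 < (z i).re) (hs : 0 < s.re)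
    (i : Fin (k + 1)) : 0 < ((Fin.snoc z s : Fin (k + 1) → ℂ) i).re :=
  Fin.lastCases (by simpa using hs) (fun i => by simpa using hz i) i

end Kernel

section Orthant

lemma posOrth_eq_pi (n : ℕ) : posOrth n = univ.pi fun _ => Ioi 0 := by
  ext x
  simp [posOrth]

lemma measurableSet_posOrth (n : ℕ) : MeasurableSet (posOrth n) :=
  posOrth_eq_pi n ▸ .univ_pi fun _ => measurableSet_Ioi

lemma volume_restrict_posOrth (n : ℕ) :
    volume.restrict (posOrth n) = Measure.pi fun _ => volume.restrict (Ioi 0) := by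
  rw [posOrth_eq_pi, volume_pi, Measure.restrict_pi_pi]

lemma smul_mem_posOrth {n : ℕ} {r : ℝ} (hr : 0 < r) {x : Fin n → ℝ} (hx : x ∈ posOrth n) :
    r • x ∈ posOrth n :=
  fun i => mul_pos hr (hx i)

lemma snoc_mem_posOrth {k : ℕ} {x : Fin k → ℝ} (hx : x ∈ posOrth k) {t : ℝ} (ht : 0 < t) :
    (Fin.snoc x t : Fin (k + 1) → ℝ) ∈ posOrth (k + 1) :=
  Fin.lastCases (by simpa using ht) fun i => by simpa using hx i

lemma measurePreserving_append {α : Type*} [MeasurableSpace α] (ν : Measure α) [SigmaFinite ν]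
    (k m : ℕ) :
    MeasurePreserving (fun p : (Fin k → α) × (Fin m → α) => Fin.append p.1 p.2)
      ((Measure.pi fun _ => ν).prod (Measure.pi fun _ => ν)) (Measure.pi fun _ => ν) := by
  have hmeas : Measurable fun p : (Fin k → α) × (Fin m → α) => Fin.append p.1 p.2 :=
    measurable_pi_iff.2 <| Fin.addCases (fun i => by simp only [Fin.append_left]; fun_prop)
      fun j => by simp only [Fin.append_right]; fun_prop
  refine ⟨hmeas, (Measure.pi_eq fun S hS => ?_).symm⟩
  have hbox : (fun p : (Fin k → α) × (Fin m → α) => Fin.append p.1 p.2) ⁻¹' univ.pi S =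
      (univ.pi fun i => S (Fin.castAdd m i)) ×ˢ (univ.pi fun j => S (Fin.natAdd k j)) := by
    ext p
    simp [Fin.forall_fin_add]
  rw [Measure.map_apply hmeas (.univ_pi hS), hbox, Measure.prod_prod, Measure.pi_pi,
    Measure.pi_pi, Fin.prod_univ_add]

lemma measurePreserving_snoc {α : Type*} [MeasurableSpace α] (ν : Measure α) [SigmaFinite ν]
    (k : ℕ) :
    MeasurePreserving (fun p : (Fin k → α) × α => (Fin.snoc p.1 p.2 : Fin (k + 1) → α))
      ((Measure.pi fun _ => ν).prod ν) (Measure.pi fun _ => ν) := by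
  have hmeas : Measurable fun p : (Fin k → α) × α => (Fin.snoc p.1 p.2 : Fin (k + 1) → α) :=
    measurable_pi_iff.2 <| Fin.lastCases (by simp only [Fin.snoc_last]; fun_prop)
      fun i => by simp only [Fin.snoc_castSucc]; fun_prop
  refine ⟨hmeas, (Measure.pi_eq fun S hS => ?_).symm⟩
  have hbox : (fun p : (Fin k → α) × α => (Fin.snoc p.1 p.2 : Fin (k + 1) → α)) ⁻¹' univ.pi S =
      (univ.pi fun i => S (Fin.castSucc i)) ×ˢ S (Fin.last k) := by
    ext p
    simp [Fin.forall_fin_succ']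
  rw [Measure.map_apply hmeas (.univ_pi hS), hbox, Measure.prod_prod, Measure.pi_pi,
    Fin.prod_univ_castSucc]

end Orthant

section MultivariateMellin

/-- Absolute convergence of the integral defining `mellinT n g z`, the counterpart of
`MellinConvergent` for `mellin`. -/
def MellinTConvergent (n : ℕ) (g : (Fin n → ℝ) → ℝ) (z : Fin n → ℂ) : Prop :=
  IntegrableOn (fun x => mellinKernel z x * g x) (posOrth n)

variable {k m : ℕ} {z : Fin k → ℂ} {w : Fin m → ℂ} {s : ℂ}

lemma MellinTConvergent.integrable_append {g : (Fin (k + m) → ℝ) → ℝ}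
    (hg : MellinTConvergent (k + m) g (Fin.append z w)) :
    Integrable (fun p : (Fin k → ℝ) × (Fin m → ℝ) =>
      mellinKernel z p.1 * (mellinKernel w p.2 * g (Fin.append p.1 p.2)))
      ((volume.restrict (posOrth k)).prod (volume.restrict (posOrth m))) := by
  rw [MellinTConvergent, IntegrableOn, volume_restrict_posOrth] at hg
  simpa only [volume_restrict_posOrth, Function.comp_def, mellinKernel_append, mul_assoc] using
    (measurePreserving_append (volume.restrict (Ioi (0 : ℝ))) k m).integrable_comp_of_integrable hg

lemma MellinTConvergent.integrable_snoc {g : (Fin (k + 1) → ℝ) → ℝ}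
    (hg : MellinTConvergent (k + 1) g (Fin.snoc z s)) :
    Integrable (fun p : (Fin k → ℝ) × ℝ =>
      mellinKernel z p.1 * ((p.2 : ℂ) ^ (s - 1) * g (Fin.snoc p.1 p.2)))
      ((volume.restrict (posOrth k)).prod (volume.restrict (Ioi 0))) := by
  rw [MellinTConvergent, IntegrableOn, volume_restrict_posOrth] at hg
  simpa only [volume_restrict_posOrth, Function.comp_def, mellinKernel_snoc, mul_assoc] using
    (measurePreserving_snoc (volume.restrict (Ioi (0 : ℝ))) k).integrable_comp_of_integrable hg

lemma MellinTConvergent.ae_append {g : (Fin (k + m) → ℝ) → ℝ}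
    (hg : MellinTConvergent (k + m) g (Fin.append z w)) :
    ∀ᵐ x ∂volume.restrict (posOrth k), MellinTConvergent m (fun y => g (Fin.append x y)) w := by
  filter_upwards [hg.integrable_append.prod_right_ae, ae_restrict_mem (measurableSet_posOrth k)]
    with x hx hx_pos
  exact (integrable_const_mul_iff (mellinKernel_ne_zero z hx_pos).isUnit _).1 hx

lemma MellinTConvergent.ae_snoc {g : (Fin (k + 1) → ℝ) → ℝ}
    (hg : MellinTConvergent (k + 1) g (Fin.snoc z s)) :
    ∀ᵐ x ∂volume.restrict (posOrth k), MellinConvergent (fun t => (g (Fin.snoc x t) : ℂ)) s := by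
  filter_upwards [hg.integrable_snoc.prod_right_ae, ae_restrict_mem (measurableSet_posOrth k)]
    with x hx hx_pos
  exact (integrable_const_mul_iff (mellinKernel_ne_zero z hx_pos).isUnit _).1 hx

lemma mellinT_append {g : (Fin (k + m) → ℝ) → ℝ}
    (hg : MellinTConvergent (k + m) g (Fin.append z w)) :
    mellinT (k + m) g (Fin.append z w) =
      ∫ x in posOrth k, mellinKernel z x * mellinT m (fun y => g (Fin.append x y)) w := by
  have hmp := measurePreserving_append (volume.restrict (Ioi (0 : ℝ))) k m
  simp only [← volume_restrict_posOrth] at hmp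
  calc mellinT (k + m) g (Fin.append z w)
      = ∫ p, mellinKernel (Fin.append z w) (Fin.append p.1 p.2) * g (Fin.append p.1 p.2)
          ∂((volume.restrict (posOrth k)).prod (volume.restrict (posOrth m))) := by
        rw [mellinT, ← hmp.map_eq, integral_map hmp.aemeasurable (hmp.map_eq.symm ▸ hg.1)]
        rfl
    _ = ∫ x in posOrth k, mellinKernel z x * mellinT m (fun y => g (Fin.append x y)) w := by
        simp only [mellinKernel_append, mul_assoc]
        rw [integral_prod _ hg.integrable_append]
        simp only [integral_const_mul]
        rfl

lemma mellinT_snoc {g : (Fin (k + 1) → ℝ) → ℝ}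
    (hg : MellinTConvergent (k + 1) g (Fin.snoc z s)) :
    mellinT (k + 1) g (Fin.snoc z s) =
      ∫ x in posOrth k, mellinKernel z x * mellin (fun t => (g (Fin.snoc x t) : ℂ)) s := by
  have hmp := measurePreserving_snoc (volume.restrict (Ioi (0 : ℝ))) k
  simp only [← volume_restrict_posOrth] at hmp
  calc mellinT (k + 1) g (Fin.snoc z s)
      = ∫ p : (Fin k → ℝ) × ℝ, mellinKernel (Fin.snoc z s : Fin (k + 1) → ℂ) (Fin.snoc p.1 p.2) *
          g (Fin.snoc p.1 p.2) ∂((volume.restrict (posOrth k)).prod (volume.restrict (Ioi 0))) := by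
        rw [mellinT, ← hmp.map_eq, integral_map hmp.aemeasurable (hmp.map_eq.symm ▸ hg.1)]
        rfl
    _ = ∫ x in posOrth k, mellinKernel z x * mellin (fun t => (g (Fin.snoc x t) : ℂ)) s := by
        simp only [mellinKernel_snoc, mul_assoc]
        rw [integral_prod _ hg.integrable_snoc]
        simp only [integral_const_mul]
        rfl

lemma mellinTConvergent_exp_neg {n : ℕ} {q : (Fin n → ℝ) → ℝ} (hq : ContinuousOn q (posOrth n))
    {R : ℝ} (hR : 0 < R) (hqR : ∀ x ∈ posOrth n, ∑ i, x i ≤ R * q x)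
    {z : Fin n → ℂ} (hz : ∀ i, 0 < (z i).re) :
    MellinTConvergent n (fun x => Real.exp (-q x)) z := by
  have hdom : IntegrableOn (fun x : Fin n → ℝ =>
      ∏ i, (x i ^ ((z i).re - 1) * Real.exp (-R⁻¹ * x i))) (posOrth n) := by
    rw [IntegrableOn, volume_restrict_posOrth]
    refine Integrable.fintype_prod (f := fun i (t : ℝ) => t ^ ((z i).re - 1) * Real.exp (-R⁻¹ * t))
      fun i => ?_
    simpa only [Real.rpow_one] using! integrableOn_rpow_mul_exp_neg_mul_rpow (p := 1)
      (s := (z i).re - 1) (by linarith [hz i]) one_pos (inv_pos.2 hR)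
  refine Integrable.mono' hdom (ContinuousOn.aestronglyMeasurable ((continuousOn_mellinKernel z).mul
    (continuous_ofReal.comp_continuousOn hq.neg.rexp)) (measurableSet_posOrth n)) ?_
  filter_upwards [ae_restrict_mem (measurableSet_posOrth n)] with x hx
  have hexp : Real.exp (-q x) ≤ ∏ i, Real.exp (-R⁻¹ * x i) := by
    rw [← Real.exp_sum, ← Finset.mul_sum, Real.exp_le_exp, neg_mul, neg_le_neg_iff]
    exact (inv_mul_le_iff₀ hR).2 (hqR x hx)
  rw [norm_mul, norm_mellinKernel z hx, norm_real, Real.norm_of_nonneg (Real.exp_pos _).le,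
    Finset.prod_mul_distrib]
  exact mul_le_mul_of_nonneg_left hexp
    (Finset.prod_nonneg fun i _ => Real.rpow_nonneg (hx i).le _)

theorem mellinT_comp_mul_Gamma {φ : (Fin m → ℝ) → ℝ}
    (hφ : AEMeasurable φ (volume.restrict (posOrth m))) (hφ_pos : ∀ y ∈ posOrth m, 0 < φ y)
    (hφ_smul : ∀ r : ℝ, 0 < r → ∀ y ∈ posOrth m, φ (r • y) = r * φ y)
    (hs : 0 < (∑ j, w j).re) (hexp : MellinTConvergent m (fun y => Real.exp (-φ y)) w)
    {F : ℝ → ℝ} (hF : MellinConvergent (fun t => (F t : ℂ)) (∑ j, w j))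
    (hFφ : MellinTConvergent m (fun y => F (φ y)) w) :
    mellinT m (fun y => F (φ y)) w * Gamma (∑ j, w j) =
      mellinT m (fun y => Real.exp (-φ y)) w * mellin (fun t => (F t : ℂ)) (∑ j, w j) := by
  have hGamma : MellinConvergent (fun t => (Real.exp (-t) : ℂ)) (∑ j, w j) := by
    simpa only [MellinConvergent, smul_eq_mul, mul_comm] using! GammaIntegral_convergent hs
  rw [Gamma_eq_integral hs, GammaIntegral_eq_mellin]
  refine integral_comp_mul_mellin_comm (A := mellinKernel w) (measurableSet_posOrth m)
    (fun r hr y hy => smul_mem_posOrth hr hy) hφ hφ_pos hφ_smul (fun r hr y hy => ?_)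
    hF hGamma hFφ hexp
  rw [mellinKernel_smul w hr hy, Module.finrank_fintype_fun_eq_card]

end MultivariateMellin

namespace IsCostFun

variable {n : ℕ} {q : (Fin n → ℝ) → ℝ}

lemma exists_sum_le (hq : IsCostFun n q) : ∃ R > 0, ∀ x ∈ posOrth n, ∑ i, x i ≤ R * q x := by
  obtain ⟨-, hpos, hhom, hbdd⟩ := hq
  obtain ⟨B, hB_pos, hB⟩ := (hbdd 1).exists_pos_norm_le
  refine ⟨(n + 1) * B, by positivity, fun x hx => ?_⟩
  have hqx := hpos x hx
  have hlevel : ‖(q x)⁻¹ • x‖ ≤ B :=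
    hB _ ⟨smul_mem_posOrth (inv_pos.2 hqx) hx,
      (hhom _ (inv_pos.2 hqx) x hx).trans (inv_mul_cancel₀ hqx.ne')⟩
  rw [norm_smul, norm_inv, Real.norm_of_nonneg hqx.le, inv_mul_le_iff₀ hqx] at hlevel
  calc ∑ i, x i ≤ ∑ _i : Fin n, ‖x‖ :=
        Finset.sum_le_sum fun i _ => (Real.le_norm_self _).trans (norm_le_pi_norm x i)
    _ = n * ‖x‖ := by simp
    _ ≤ (n + 1) * (q x * B) := by gcongr; linarith
    _ = (n + 1) * B * q x := by ring

lemma mellinTConvergent (hq : IsCostFun n q) {z : Fin n → ℂ} (hz : ∀ i, 0 < (z i).re) :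
    MellinTConvergent n (fun x => Real.exp (-q x)) z :=
  have ⟨_, hR, hqR⟩ := hq.exists_sum_le
  mellinTConvergent_exp_neg hq.1.continuousOn hR hqR hz

end IsCostFun

lemma isBounded_level_of_sum_le {n : ℕ} {q : (Fin n → ℝ) → ℝ} {R : ℝ}
    (hqR : ∀ x ∈ posOrth n, ∑ i, x i ≤ R * q x) (t : ℝ) :
    Bornology.IsBounded {x | x ∈ posOrth n ∧ q x = t} := by
  refine isBounded_iff_forall_norm_le.2 ⟨R * t, ?_⟩
  rintro x ⟨hx, rfl⟩
  have hsum : 0 ≤ ∑ i, x i := Finset.sum_nonneg fun i _ => (hx i).le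
  refine le_trans ((pi_norm_le_iff_of_nonneg hsum).2 fun i => ?_) (hqR x hx)
  rw [Real.norm_of_nonneg (hx i).le]
  exact Finset.single_le_sum (fun j _ => (hx j).le) (Finset.mem_univ i)

section Nested

variable {k m : ℕ} {q : (Fin (k + 1) → ℝ) → ℝ} {φ : (Fin m → ℝ) → ℝ}

lemma nestedCost_append (q : (Fin (k + 1) → ℝ) → ℝ) (φ : (Fin m → ℝ) → ℝ) (x : Fin k → ℝ)
    (y : Fin m → ℝ) : nestedCost k m q φ (Fin.append x y) = q (Fin.snoc x (φ y)) := by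
  simp only [nestedCost, Fin.append_left, Fin.append_right]

/-- The argument `(x, φ(y))` at which `nestedCost` evaluates its outer function. -/
def nestedArg (k m : ℕ) (φ : (Fin m → ℝ) → ℝ) (v : Fin (k + m) → ℝ) : Fin (k + 1) → ℝ :=
  Fin.snoc (fun i => v (Fin.castAdd m i)) (φ fun j => v (Fin.natAdd k j))

lemma nestedArg_mem_posOrth (hφ_pos : ∀ y ∈ posOrth m, 0 < φ y) {v : Fin (k + m) → ℝ}
    (hv : v ∈ posOrth (k + m)) : nestedArg k m φ v ∈ posOrth (k + 1) :=
  snoc_mem_posOrth (fun _ => hv _) (hφ_pos _ fun _ => hv _)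

lemma contDiffOn_nestedArg {l : WithTop ℕ∞} (hφ : ContDiffOn ℝ l φ (posOrth m)) :
    ContDiffOn ℝ l (nestedArg k m φ) (posOrth (k + m)) := by
  refine contDiffOn_pi.2 (Fin.lastCases ?_ fun i => ?_)
  · simp only [nestedArg, Fin.snoc_last]
    exact hφ.comp (by fun_prop) fun v hv j => hv (Fin.natAdd k j)
  · simp only [nestedArg, Fin.snoc_castSucc]
    fun_prop

lemma nestedArg_smul (hφ_smul : ∀ r : ℝ, 0 < r → ∀ y ∈ posOrth m, φ (r • y) = r * φ y)
    {r : ℝ} (hr : 0 < r) {v : Fin (k + m) → ℝ} (hv : v ∈ posOrth (k + m)) :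
    nestedArg k m φ (r • v) = r • nestedArg k m φ v := by
  refine funext (Fin.lastCases ?_ fun i => ?_)
  · simpa only [nestedArg, Fin.snoc_last, Pi.smul_apply] using!
      hφ_smul r hr _ fun j => hv (Fin.natAdd k j)
  · simp only [nestedArg, Fin.snoc_castSucc, Pi.smul_apply]

lemma sum_le_mul_sum_nestedArg {R : ℝ} (hφR : ∀ y ∈ posOrth m, ∑ j, y j ≤ R * φ y)
    (hR : 1 ≤ R) {v : Fin (k + m) → ℝ} (hv : v ∈ posOrth (k + m)) :
    ∑ i, v i ≤ R * ∑ i, nestedArg k m φ v i := by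
  have hφ := hφR (fun j => v (Fin.natAdd k j)) fun _ => hv _
  have hx : ∑ i : Fin k, v (Fin.castAdd m i) ≤ R * ∑ i : Fin k, v (Fin.castAdd m i) :=
    le_mul_of_one_le_left (Finset.sum_nonneg fun i _ => (hv _).le) hR
  simp only [nestedArg, Fin.sum_univ_add, Fin.sum_univ_castSucc, Fin.snoc_castSucc, Fin.snoc_last]
  linarith

lemma isCostFun_nestedCost (hq : IsCostFun (k + 1) q) (hφ : IsCostFun m φ) :
    IsCostFun (k + m) (nestedCost k m q φ) := by
  obtain ⟨Rq, -, hq_sum⟩ := hq.exists_sum_le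
  obtain ⟨Rφ, -, hφ_sum⟩ := hφ.exists_sum_le
  obtain ⟨hq_diff, hq_pos, hq_smul, -⟩ := hq
  obtain ⟨hφ_diff, hφ_pos, hφ_smul, -⟩ := hφ
  have harg : MapsTo (nestedArg k m φ) (posOrth (k + m)) (posOrth (k + 1)) :=
    fun v hv => nestedArg_mem_posOrth hφ_pos hv
  refine ⟨hq_diff.comp (contDiffOn_nestedArg hφ_diff) harg, fun v hv => hq_pos _ (harg hv),
    fun r hr v hv => ?_, isBounded_level_of_sum_le (R := max 1 Rφ * Rq) fun v hv => ?_⟩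
  · exact (congrArg q (nestedArg_smul hφ_smul hr hv)).trans (hq_smul r hr _ (harg hv))
  · have hmax : ∀ y ∈ posOrth m, ∑ j, y j ≤ max 1 Rφ * φ y := fun y hy =>
      (hφ_sum y hy).trans (mul_le_mul_of_nonneg_right (le_max_right _ _) (hφ_pos y hy).le)
    calc ∑ i, v i ≤ max 1 Rφ * ∑ i, nestedArg k m φ v i :=
          sum_le_mul_sum_nestedArg hmax (le_max_left _ _) hv
      _ ≤ max 1 Rφ * (Rq * q (nestedArg k m φ v)) := by gcongr; exact hq_sum _ (harg hv)
      _ = max 1 Rφ * Rq * nestedCost k m q φ v := (mul_assoc _ _ _).symm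

theorem mellin_nestedCost_eq_general {g : (Fin (k + 1) → ℝ) → ℝ} {z : Fin k → ℂ} {w : Fin m → ℂ}
    (hφ : AEMeasurable φ (volume.restrict (posOrth m))) (hφ_pos : ∀ y ∈ posOrth m, 0 < φ y)
    (hφ_smul : ∀ r : ℝ, 0 < r → ∀ y ∈ posOrth m, φ (r • y) = r * φ y)
    (hs : 0 < (∑ j, w j).re) (hexp : MellinTConvergent m (fun y => Real.exp (-φ y)) w)
    (hg : MellinTConvergent (k + 1) g (Fin.snoc z (∑ j, w j)))
    (hgφ : MellinTConvergent (k + m) (nestedCost k m g φ) (Fin.append z w)) :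
    mellinT (k + m) (nestedCost k m g φ) (Fin.append z w) =
      mellinT m (fun y => Real.exp (-φ y)) w * mellinT (k + 1) g (Fin.snoc z (∑ j, w j)) /
        Gamma (∑ j, w j) := by
  rw [eq_div_iff (Gamma_ne_zero_of_re_pos hs), mellinT_append hgφ, mellinT_snoc hg,
    ← integral_mul_const, ← integral_const_mul]
  refine integral_congr_ae ?_
  filter_upwards [hgφ.ae_append, hg.ae_snoc] with x hx_nested hx
  simp only [nestedCost_append] at hx_nested ⊢
  rw [mul_assoc, mellinT_comp_mul_Gamma hφ hφ_pos hφ_smul hs hexp hx hx_nested, mul_left_comm]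

end Nested

/-- Mellin transform of `e^{-q̃}` for the composed cost function `q̃(x,y) = q(x,φ(y))`:
for `Re z ∈ ℝ^k_+`, `Re w ∈ ℝ^m_+` and `s = w₁ + ⋯ + w_m`,
`(M e^{-q̃})(z,w) = (M e^{-φ})(w) (M e^{-q})(z,s) / Γ(s)`. -/
theorem mellin_nestedCost_eq
    (k m : ℕ) (hk : 1 ≤ k) (hm : 2 ≤ m)
    (q : (Fin (k + 1) → ℝ) → ℝ) (hq : IsCostFun (k + 1) q)
    (φ : (Fin m → ℝ) → ℝ) (hφ : IsCostFun m φ) :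
    ∀ (z : Fin k → ℂ) (w : Fin m → ℂ),
      (∀ i, 0 < (z i).re) → (∀ j, 0 < (w j).re) →
      mellinT (k + m) (fun v => Real.exp (-nestedCost k m q φ v)) (Fin.append z w) =
        mellinT m (fun y => Real.exp (-φ y)) w *
          mellinT (k + 1) (fun u => Real.exp (-q u)) (Fin.snoc z (∑ j, w j)) /
          Complex.Gamma (∑ j, w j) := by
  intro z w hz hw
  have : NeZero m := ⟨by lia⟩
  have hs := re_sum_pos hw
  exact mellin_nestedCost_eq_general
    (hφ.1.continuousOn.aemeasurable (measurableSet_posOrth m)) hφ.2.1 hφ.2.2.1 hs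
    (hφ.mellinTConvergent hw) (hq.mellinTConvergent (re_snoc_pos hz hs))
    ((isCostFun_nestedCost hq hφ).mellinTConvergent (re_append_pos hz hw))
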